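/- Let K be a field, n ≥ 1, and a = (a₀,…,a_{n−1}) ∈ Kⁿ such that the polynomial p_a(x) = xⁿ + a_{n−1}x^{n−1} + ⋯ + a₁x + a₀ is separable and irreducible over K. Then there exist a scheme V, an étale morphism f : V ⟶ 𝔸ⁿ_K of schemes over Spec K, and a K-point v : Spec K ⟶ V over Spec K, such that the K-point f ∘ v of 𝔸ⁿ_K corresponds to the tuple a, and for every K-point w : Spec K ⟶ V over Spec K, the tuple b ∈ Kⁿ corresponding to the K-point f ∘ w of 𝔸ⁿ_K satisfies: p_b is separable and irreducible over K, and the K-algebras K[x]/(p_b) and K[x]/(p_a) are isomorphic. -/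

import Mathlib

open Polynomial AlgebraicGeometry CategoryTheory

universe u

namespace KrasnerAux
open TensorProduct

section weil
variable {A S : Type u} [CommRing A] [CommRing S] [Algebra A S]

/-- base change map -/
noncomputable def bm (S : Type u) [CommRing S] [Algebra A S] {R R' : Type u} [CommRing R] [Algebra A R] [CommRing R'] [Algebra A R']
    (φ : R →ₐ[A] R') : R ⊗[A] S →ₐ[A] R' ⊗[A] S :=
  Algebra.TensorProduct.map φ (AlgHom.id A S)

variable {R R' R'' : Type u} [CommRing R] [Algebra A R] [CommRing R'] [Algebra A R']
  [CommRing R''] [Algebra A R'']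

lemma bm_tmul (φ : R →ₐ[A] R') (r : R) (s : S) : bm S φ (r ⊗ₜ s) = φ r ⊗ₜ s := by
  simp [bm]

lemma bm_comp (φ : R →ₐ[A] R') (ψ : R' →ₐ[A] R'') (x : R ⊗[A] S) :
    bm S (ψ.comp φ) x = bm S ψ (bm S φ x) := by
  induction x with
  | zero => simp
  | add x y hx hy => simp [hx, hy]
  | tmul r s => simp [bm_tmul]

variable {ι : Type} [Fintype ι] (e : Module.Basis ι A S)

lemma repr_bm (φ : R →ₐ[A] R') (x : R ⊗[A] S) (i : ι) :
    (Algebra.TensorProduct.basis R' e).repr (bm S φ x) i =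
      φ ((Algebra.TensorProduct.basis R e).repr x i) := by
  induction x with
  | zero => simp
  | add x y hx hy => simp [hx, hy]
  | tmul r s => simp [bm_tmul]

lemma eq_sum (x : R ⊗[A] S) :
    x = ∑ i, ((Algebra.TensorProduct.basis R e).repr x i) ⊗ₜ[A] e i := by
  conv_lhs => rw [← (Algebra.TensorProduct.basis R e).sum_repr x]
  refine Finset.sum_congr rfl fun i _ => ?_
  simp [TensorProduct.smul_tmul']

lemma ker_mul {ι : Type} [Fintype ι] (e : Module.Basis ι A S) (I : Ideal R) (hI : I ^ 2 = ⊥) (x y : R ⊗[A] S)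
    (hx : bm S (Ideal.Quotient.mkₐ A I) x = 0) (hy : bm S (Ideal.Quotient.mkₐ A I) y = 0) :
    x * y = 0 := by
  have key : ∀ z : R ⊗[A] S, bm S (Ideal.Quotient.mkₐ A I) z = 0 →
      ∀ i, (Algebra.TensorProduct.basis R e).repr z i ∈ I := by
    intro z hz i
    have := repr_bm e (Ideal.Quotient.mkₐ A I) z i
    rw [hz] at this
    rw [← Ideal.Quotient.eq_zero_iff_mem]
    simpa using this.symm
  rw [eq_sum e x, eq_sum e y, Finset.sum_mul_sum]
  refine Finset.sum_eq_zero fun i _ => Finset.sum_eq_zero fun j _ => ?_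
  have : (Algebra.TensorProduct.basis R e).repr x i * (Algebra.TensorProduct.basis R e).repr y j = 0 := by
    have h := Ideal.mul_mem_mul (key x hx i) (key y hy j)
    rw [← pow_two, hI] at h
    simpa using h
  rw [Algebra.TensorProduct.tmul_mul_tmul, this, TensorProduct.zero_tmul]

/-- generic element -/
noncomputable def gen (j : ι → R) : R ⊗[A] S := ∑ i, j i ⊗ₜ[A] e i

lemma bm_gen (φ : R →ₐ[A] R') (j : ι → R) : bm S φ (gen e j) = gen e (fun i => φ (j i)) := by
  simp [gen, bm_tmul]

lemma repr_gen (j : ι → R) (i : ι) : (Algebra.TensorProduct.basis R e).repr (gen e j) i = j i := by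
  classical
  simp [gen, Finsupp.single_apply]

lemma exists_gen (x : R ⊗[A] S) : gen e (fun i => (Algebra.TensorProduct.basis R e).repr x i) = x :=
  (eq_sum e x).symm

lemma bm_surj (φ : R →ₐ[A] R') (hφ : Function.Surjective φ) :
    Function.Surjective (bm S φ) := by
  intro x
  induction x with
  | zero => exact ⟨0, by simp⟩
  | add x y hx hy =>
    obtain ⟨a, rfl⟩ := hx
    obtain ⟨b, rfl⟩ := hy
    exact ⟨a + b, by simp⟩
  | tmul r s =>
    obtain ⟨r, rfl⟩ := hφ r
    exact ⟨r ⊗ₜ s, bm_tmul _ _ _⟩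

variable (P : A[X])

/-- polynomial ring -/
abbrev BB (A : Type u) [CommRing A] (ι : Type) : Type u := MvPolynomial (ι ⊕ ι) A

noncomputable def Yg : BB A ι ⊗[A] S := gen e (fun i => MvPolynomial.X (Sum.inl i))
noncomputable def Zg : BB A ι ⊗[A] S := gen e (fun i => MvPolynomial.X (Sum.inr i))

noncomputable def eqs : ι ⊕ ι → BB A ι :=
  Sum.elim (fun i => (Algebra.TensorProduct.basis _ e).repr (aeval (Yg e) P) i)
    (fun i => (Algebra.TensorProduct.basis _ e).repr (aeval (Yg e) (derivative P) * Zg e - 1) i)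

noncomputable def idl : Ideal (BB A ι) := Ideal.span (Set.range (eqs e P))

abbrev WR : Type u := BB A ι ⧸ idl e P

noncomputable def yW : WR e P ⊗[A] S := bm S (Ideal.Quotient.mkₐ A (idl e P)) (Yg e)
noncomputable def zW : WR e P ⊗[A] S := bm S (Ideal.Quotient.mkₐ A (idl e P)) (Zg e)

lemma yW_root : aeval (yW e P) P = 0 := by
  rw [yW, aeval_algHom_apply]
  apply (Algebra.TensorProduct.basis _ e).repr.injective
  ext i
  rw [repr_bm]
  simp only [map_zero, Finsupp.coe_zero, Pi.zero_apply, Ideal.Quotient.mkₐ_eq_mk]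
  rw [Ideal.Quotient.eq_zero_iff_mem]
  exact Ideal.subset_span ⟨Sum.inl i, rfl⟩

lemma zW_inv : aeval (yW e P) (derivative P) * zW e P = 1 := by
  rw [← sub_eq_zero, yW, zW, aeval_algHom_apply, ← map_mul,
    ← map_one (bm S (Ideal.Quotient.mkₐ A (idl e P))), ← map_sub]
  apply (Algebra.TensorProduct.basis _ e).repr.injective
  ext i
  rw [repr_bm]
  simp only [map_zero, Finsupp.coe_zero, Pi.zero_apply, Ideal.Quotient.mkₐ_eq_mk]
  rw [Ideal.Quotient.eq_zero_iff_mem]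
  exact Ideal.subset_span ⟨Sum.inr i, rfl⟩

lemma exists_hom (y z : R ⊗[A] S) (hy : aeval y P = 0) (hz : aeval y (derivative P) * z = 1) :
    ∃ φ : WR e P →ₐ[A] R, bm S φ (yW e P) = y ∧ bm S φ (zW e P) = z := by
  let φ' : BB A ι →ₐ[A] R := MvPolynomial.aeval (Sum.elim
    (fun i => (Algebra.TensorProduct.basis R e).repr y i)
    (fun i => (Algebra.TensorProduct.basis R e).repr z i))
  have h1 : bm S φ' (Yg e) = y := by
    rw [Yg, bm_gen]; simp only [φ', MvPolynomial.aeval_X, Sum.elim_inl]; exact exists_gen e y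
  have h2 : bm S φ' (Zg e) = z := by
    rw [Zg, bm_gen]; simp only [φ', MvPolynomial.aeval_X, Sum.elim_inr]; exact exists_gen e z
  have h3 : ∀ a : BB A ι, a ∈ idl e P → φ' a = 0 := by
    intro a ha
    have : idl e P ≤ RingHom.ker φ' := by
      rw [idl, Ideal.span_le]
      rintro _ ⟨i | i, rfl⟩
      · simp only [eqs, Sum.elim_inl, SetLike.mem_coe, RingHom.mem_ker]
        rw [← repr_bm, ← aeval_algHom_apply, h1, hy]; simp
      · simp only [eqs, Sum.elim_inr, SetLike.mem_coe, RingHom.mem_ker]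
        rw [← repr_bm, map_sub, map_mul, ← aeval_algHom_apply, h1, h2, hz]; simp
    exact this ha
  refine ⟨Ideal.Quotient.liftₐ (idl e P) φ' h3, ?_, ?_⟩
  · rw [yW, ← bm_comp, Ideal.Quotient.liftₐ_comp, h1]
  · rw [zW, ← bm_comp, Ideal.Quotient.liftₐ_comp, h2]

lemma hom_ext' (φ ψ : WR e P →ₐ[A] R) (hy : bm S φ (yW e P) = bm S ψ (yW e P))
    (hz : bm S φ (zW e P) = bm S ψ (zW e P)) : φ = ψ := by
  apply Ideal.Quotient.algHom_ext
  apply MvPolynomial.algHom_ext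
  rw [yW, ← bm_comp, ← bm_comp, Yg, bm_gen, bm_gen] at hy
  rw [zW, ← bm_comp, ← bm_comp, Zg, bm_gen, bm_gen] at hz
  rintro (i | i)
  · have := congrArg (fun x => (Algebra.TensorProduct.basis R e).repr x i) hy
    simp only [repr_gen] at this
    exact this
  · have := congrArg (fun x => (Algebra.TensorProduct.basis R e).repr x i) hz
    simp only [repr_gen] at this
    exact this

instance formallyEtale : Algebra.FormallyEtale A (WR e P) := by
  refine Algebra.FormallyEtale.iff_comp_bijective.mpr fun R _ _ I hI ↦ ⟨?_, ?_⟩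
  · intro φ ψ h
    have hr : ∀ (φ : WR e P →ₐ[A] R), aeval (bm S φ (yW e P)) P = 0 := fun φ => by
      rw [aeval_algHom_apply, yW_root, map_zero]
    have hr' : ∀ (φ : WR e P →ₐ[A] R),
        aeval (bm S φ (yW e P)) (derivative P) * bm S φ (zW e P) = 1 := fun φ => by
      rw [aeval_algHom_apply, ← map_mul, zW_inv, map_one]
    have hk : ∀ x, bm S (Ideal.Quotient.mkₐ A I) (bm S φ x) =
        bm S (Ideal.Quotient.mkₐ A I) (bm S ψ x) := fun x => by
      rw [← bm_comp, ← bm_comp]; exact congrArg (fun t => bm S t x) h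
    have hy : bm S ψ (yW e P) = bm S φ (yW e P) := by
      obtain ⟨k, hk'⟩ : ∃ k, k = bm S ψ (yW e P) - bm S φ (yW e P) := ⟨_, rfl⟩
      have h0 : k ^ 2 = 0 := by
        rw [pow_two]
        apply ker_mul e I hI <;> rw [hk', map_sub, hk, sub_self]
      have h1 := Polynomial.aeval_add_of_sq_eq_zero P (bm S φ (yW e P)) k h0
      rw [show bm S φ (yW e P) + k = bm S ψ (yW e P) by rw [hk']; ring, hr, hr, zero_add] at h1
      have : k = 0 := by
        linear_combination (-k) * hr' φ - bm S φ (zW e P) * h1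
      rw [this] at hk'
      exact sub_eq_zero.mp hk'.symm
    have a1 := hr' φ
    have a2 := hr' ψ
    rw [hy] at a2
    refine hom_ext' e P φ ψ hy.symm ?_
    linear_combination (bm S ψ (zW e P)) * a1 - (bm S φ (zW e P)) * a2
  · intro ψ
    let π := bm S (Ideal.Quotient.mkₐ A I)
    have hπ : Function.Surjective π := bm_surj _ (Ideal.Quotient.mkₐ_surjective A I)
    have hr : aeval (bm S ψ (yW e P)) P = 0 := by
      rw [aeval_algHom_apply, yW_root, map_zero]
    have hr' : aeval (bm S ψ (yW e P)) (derivative P) * bm S ψ (zW e P) = 1 := by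
      rw [aeval_algHom_apply, ← map_mul, zW_inv, map_one]
    obtain ⟨y1, hy1⟩ := hπ (bm S ψ (yW e P))
    obtain ⟨z1, hz1⟩ := hπ (bm S ψ (zW e P))
    have hm : ∀ x y, π x = 0 → π y = 0 → x * y = 0 := ker_mul e I hI
    have hp1 : π (aeval y1 P) = 0 := by rw [← aeval_algHom_apply, hy1, hr]
    have hp2 : π (aeval y1 (derivative P) * z1 - 1) = 0 := by
      rw [map_sub, map_mul, ← aeval_algHom_apply, hy1, hz1, hr', map_one, sub_self]
    have hk : π (-(aeval y1 P * z1)) = 0 := by rw [map_neg, map_mul, hp1]; simp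
    have hy : aeval (y1 + -(aeval y1 P * z1)) P = 0 := by
      rw [Polynomial.aeval_add_of_sq_eq_zero _ _ _ (by rw [pow_two]; exact hm _ _ hk hk)]
      linear_combination - hm _ _ hp1 hp2
    obtain ⟨y, hy'⟩ : ∃ y, y = y1 + -(aeval y1 P * z1) := ⟨_, rfl⟩
    rw [← hy'] at hy
    have hyy : π y = bm S ψ (yW e P) := by rw [hy', map_add, hk, add_zero, hy1]
    have hp3 : π (aeval y (derivative P) * z1 - 1) = 0 := by
      rw [map_sub, map_mul, ← aeval_algHom_apply, hyy, hz1, hr', map_one, sub_self]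
    have hz : aeval y (derivative P) * (z1 * (2 - aeval y (derivative P) * z1)) = 1 := by
      linear_combination - hm _ _ hp3 hp3
    obtain ⟨φ, h1, h2⟩ := exists_hom e P y _ hy hz
    refine ⟨φ, ?_⟩
    apply hom_ext' e P
    · rw [bm_comp, h1]; exact hyy
    · rw [bm_comp, h2]
      change π _ = _
      rw [map_mul, map_sub, map_mul, ← aeval_algHom_apply, hyy, hz1, hr', map_ofNat]
      ring

instance etale : Algebra.Etale A (WR e P) where
  finitePresentation := by
    refine Algebra.FinitePresentation.quotient ?_
    exact ⟨(Set.finite_range (eqs e P)).toFinset, by simp [idl]⟩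
end weil

/-- The polynomial `p_b`. -/
noncomputable abbrev pol {R : Type u} [CommRing R] {n : ℕ} (b : Fin n → R) : R[X] :=
  X ^ n + ∑ j : Fin n, C (b j) * X ^ (j : ℕ)

lemma pol_deg {R : Type u} [CommRing R] {n : ℕ} (b : Fin n → R) :
    (∑ j : Fin n, C (b j) * X ^ (j : ℕ)).degree < (n : WithBot ℕ) := by
  exact Polynomial.degree_sum_fin_lt b

lemma pol_monic {R : Type u} [CommRing R] {n : ℕ} (b : Fin n → R) : (pol b).Monic :=
  monic_X_pow_add (pol_deg b)

lemma pol_natDegree {R : Type u} [CommRing R] [Nontrivial R] {n : ℕ} (b : Fin n → R) :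
    (pol b).natDegree = n := by
  rw [natDegree_add_eq_left_of_degree_lt, natDegree_X_pow]
  rw [degree_X_pow]; exact pol_deg b

lemma field_part {K L : Type u} [Field K] [Field L] [Algebra K L] {n : ℕ}
    (e : Module.Basis (Fin n) K L) (b : Fin n → K) (y : L) (hy : aeval y (pol b) = 0)
    (hy' : aeval y (derivative (pol b)) ≠ 0)
    (hD : IsUnit (e.det (fun j : Fin n => y ^ (j : ℕ)))) :
    (pol b).Separable ∧ Irreducible (pol b) ∧ Nonempty (AdjoinRoot (pol b) ≃ₐ[K] L) := by
  have hli := ((Module.Basis.is_basis_iff_det e).mpr hD).1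
  have hint : IsIntegral K y := ⟨pol b, pol_monic b, hy⟩
  have hmin : minpoly K y = pol b := by
    symm
    apply minpoly.unique' K y (pol_monic b) hy
    intro q hq
    by_contra! hcon
    obtain ⟨h0, hq0⟩ := hcon
    have hqn : q.natDegree < n := by
      rw [← pol_natDegree b]
      exact natDegree_lt_natDegree h0 hq
    rw [aeval_eq_sum_range' hqn, ← Fin.sum_univ_eq_sum_range (fun i => q.coeff i • y ^ i)] at hq0
    have hc := (Fintype.linearIndependent_iff.mp hli) (fun i => q.coeff i) hq0
    exact h0 (by
      ext k
      by_cases hk : k < n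
      · simpa using hc ⟨k, hk⟩
      · rw [coeff_zero]; exact coeff_eq_zero_of_natDegree_lt (by lia))
  have hirr : Irreducible (pol b) := hmin ▸ minpoly.irreducible hint
  refine ⟨(Polynomial.separable_iff_derivative_ne_zero hirr).mpr fun h => hy' (by rw [h, map_zero]), hirr, ?_⟩
  have := Fact.mk hirr
  let g : AdjoinRoot (pol b) →ₐ[K] L := AdjoinRoot.liftAlgHom (pol b) (Algebra.ofId K L) y hy
  have hinj : Function.Injective g := g.toRingHom.injective
  have : FiniteDimensional K (AdjoinRoot (pol b)) := (pol_monic b).finite_adjoinRoot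
  have : FiniteDimensional K L := e.finiteDimensional_of_finite
  have hfr : Module.finrank K (AdjoinRoot (pol b)) = Module.finrank K L := by
    rw [Module.finrank_eq_card_basis e, (AdjoinRoot.powerBasis' (pol_monic b)).finrank]
    simp [AdjoinRoot.powerBasis', pol_natDegree]
  exact ⟨AlgEquiv.ofBijective g ⟨hinj,
    (LinearMap.injective_iff_surjective_of_finrank_eq_finrank hfr (f := g.toLinearMap)).mp hinj⟩⟩

section main
variable {K L : Type u} [Field K] [Field L] [Algebra K L] {n : ℕ}

local notation "𝔸" => MvPolynomial (Fin n) K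

variable [Algebra (MvPolynomial (Fin n) K) K] [IsScalarTower K (MvPolynomial (Fin n) K) K]

variable (K L n) in
noncomputable def theta : K ⊗[𝔸] (𝔸 ⊗[K] L) ≃ₐ[K] L :=
  (Algebra.TensorProduct.cancelBaseChange K 𝔸 K K L).trans (Algebra.TensorProduct.lid K L)

lemma theta_repr (e : Module.Basis (Fin n) K L) (x : K ⊗[𝔸] (𝔸 ⊗[K] L)) (i : Fin n) :
    e.repr (theta K L n x) i = (Algebra.TensorProduct.basis K
      (Algebra.TensorProduct.basis 𝔸 e)).repr x i := by
  induction x with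
  | zero => simp
  | add x y hx hy => simp [hx, hy]
  | tmul r s =>
    induction s with
    | zero => simp
    | add x y hx hy => simp only [TensorProduct.tmul_add, map_add, Finsupp.add_apply, hx, hy]
    | tmul a l =>
      have h : ∀ c : K, algebraMap 𝔸 K (MvPolynomial.C c) = c := fun c =>
        (IsScalarTower.algebraMap_apply K 𝔸 K c).symm
      have h2 : theta K L n (r ⊗ₜ (a ⊗ₜ l)) = (algebraMap 𝔸 K a * r) • l := by
        simp [theta, Algebra.smul_def]
      rw [h2, map_smul]
      simp only [Finsupp.smul_apply,
        Algebra.TensorProduct.basis_repr_tmul, Finsupp.mapRange_apply, smul_eq_mul,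
        Algebra.smul_def, map_mul, MvPolynomial.algebraMap_eq, h]
      ring

lemma theta_aeval (x : K ⊗[𝔸] (𝔸 ⊗[K] L)) (P : 𝔸[X]) :
    theta K L n (aeval x P) = aeval (theta K L n x) (P.map (algebraMap 𝔸 K)) := by
  rw [← aeval_map_algebraMap K, aeval_algHom_apply]
end main

/-- The generic polynomial. -/
noncomputable abbrev PP (K : Type u) [Field K] (n : ℕ) : (MvPolynomial (Fin n) K)[X] :=
  pol (fun j : Fin n => (MvPolynomial.X j : MvPolynomial (Fin n) K))

noncomputable abbrev eA {K L : Type u} [Field K] [Field L] [Algebra K L] {n : ℕ}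
    (e : Module.Basis (Fin n) K L) :
    Module.Basis (Fin n) (MvPolynomial (Fin n) K) (MvPolynomial (Fin n) K ⊗[K] L) :=
  Algebra.TensorProduct.basis (MvPolynomial (Fin n) K) e

/-- The determinant of `1, y, …, y^(n-1)`. -/
noncomputable def DD {K L : Type u} [Field K] [Field L] [Algebra K L] {n : ℕ}
    (e : Module.Basis (Fin n) K L) : WR (eA e) (PP K n) :=
  Matrix.det (Matrix.of fun i j : Fin n =>
    (Algebra.TensorProduct.basis _ (eA e)).repr (yW (eA e) (PP K n) ^ (j : ℕ)) i)

lemma DD_map {K L : Type u} [Field K] [Field L] [Algebra K L] {n : ℕ}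
    (e : Module.Basis (Fin n) K L)
    [Algebra (MvPolynomial (Fin n) K) K] [IsScalarTower K (MvPolynomial (Fin n) K) K]
    (φ : WR (eA e) (PP K n) →ₐ[MvPolynomial (Fin n) K] K) :
    φ (DD e) = e.det (fun j : Fin n => (theta K L n (bm _ φ (yW (eA e) (PP K n)))) ^ (j : ℕ)) := by
  rw [DD, Module.Basis.det_apply, AlgHom.map_det]
  congr 1
  ext i j
  simp only [AlgHom.mapMatrix_apply, Matrix.map_apply, Matrix.of_apply, Module.Basis.toMatrix_apply]
  rw [← map_pow, ← map_pow, theta_repr, repr_bm]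

lemma PP_map {K : Type u} [Field K] {n : ℕ} (b : Fin n → K) :
    (PP K n).map (MvPolynomial.aeval b).toRingHom = pol b := by
  simp [PP, pol, Polynomial.map_sum]

theorem core {K : Type u} [Field K] (n : ℕ) (a : Fin n → K)
    (hsep : (pol a).Separable) (hirr : Irreducible (pol a)) :
    ∃ (B : Type u) (_ : CommRing B) (_ : Algebra (MvPolynomial (Fin n) K) B),
      Algebra.Etale (MvPolynomial (Fin n) K) B ∧
      (∃ φ : B →+* K, φ.comp (algebraMap (MvPolynomial (Fin n) K) B) = (MvPolynomial.aeval a).toRingHom) ∧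
      ∀ (φ : B →+* K) (b : Fin n → K), φ.comp (algebraMap (MvPolynomial (Fin n) K) B) = (MvPolynomial.aeval b).toRingHom →
        (pol b).Separable ∧ Irreducible (pol b) ∧
          Nonempty (AdjoinRoot (pol b) ≃ₐ[K] AdjoinRoot (pol a)) := by
  have := Fact.mk hirr
  let e : Module.Basis (Fin n) K (AdjoinRoot (pol a)) :=
    (AdjoinRoot.powerBasis' (pol_monic a)).basis.reindex (finCongr (pol_natDegree a))
  have he : ∀ j, e j = AdjoinRoot.root (pol a) ^ (j : ℕ) := by
    intro j
    simp [e, PowerBasis.basis_eq_pow]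
    rfl
  refine ⟨Localization.Away (DD e), inferInstance, inferInstance, inferInstance, ?_, ?_⟩
  · letI : Algebra (MvPolynomial (Fin n) K) K := (MvPolynomial.aeval a).toRingHom.toAlgebra
    have hst : IsScalarTower K (MvPolynomial (Fin n) K) K := IsScalarTower.of_algebraMap_eq
      (fun x => by
        change x = MvPolynomial.aeval a (algebraMap _ _ x)
        simp)
    obtain ⟨q, hq⟩ : ∃ q, aeval (AdjoinRoot.root (pol a)) (derivative (pol a)) * q = 1 := by
      obtain ⟨u, v, huv⟩ := hsep
      refine ⟨aeval (AdjoinRoot.root (pol a)) v, ?_⟩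
      have := congrArg (aeval (AdjoinRoot.root (pol a))) huv
      rw [map_add, map_mul, map_mul, map_one, AdjoinRoot.aeval_eq (f := pol a) (pol a), AdjoinRoot.mk_self, mul_zero, zero_add] at this
      rw [mul_comm]; exact this
    let θ := theta K (AdjoinRoot (pol a)) n
    obtain ⟨φ, h1, h2⟩ := exists_hom (R := K) (eA e) (PP K n)
      (θ.symm (AdjoinRoot.root (pol a))) (θ.symm q)
      (by
        apply θ.injective
        rw [theta_aeval, AlgEquiv.apply_symm_apply, map_zero]
        erw [PP_map]
        rw [AdjoinRoot.aeval_eq, AdjoinRoot.mk_self])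
      (by
        apply θ.injective
        rw [map_mul, theta_aeval, AlgEquiv.apply_symm_apply, AlgEquiv.apply_symm_apply, map_one,
          ← derivative_map]
        erw [PP_map]
        exact hq)
    have hD : φ (DD e) = 1 := by
      rw [DD_map, h1]
      change e.det (fun j : Fin n => (θ (θ.symm _)) ^ (j : ℕ)) = 1
      rw [AlgEquiv.apply_symm_apply]
      simp_rw [← he]
      exact e.det_self
    refine ⟨IsLocalization.Away.lift (DD e) (g := φ.toRingHom)
      (by change IsUnit (φ (DD e)); rw [hD]; exact isUnit_one), ?_⟩
    rw [IsScalarTower.algebraMap_eq _ (WR (eA e) (PP K n)), ← RingHom.comp_assoc,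
      IsLocalization.Away.lift_comp]
    exact φ.comp_algebraMap
  · intro φ b hb
    letI : Algebra (MvPolynomial (Fin n) K) K := (MvPolynomial.aeval b).toRingHom.toAlgebra
    have hst : IsScalarTower K (MvPolynomial (Fin n) K) K := IsScalarTower.of_algebraMap_eq
      (fun x => by
        change x = MvPolynomial.aeval b (algebraMap _ _ x)
        simp)
    let ψ : WR (eA e) (PP K n) →ₐ[MvPolynomial (Fin n) K] K :=
      { φ.comp (algebraMap (WR (eA e) (PP K n)) (Localization.Away (DD e))) with
        commutes' := fun r => by
          have := RingHom.congr_fun hb r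
          exact this }
    have hD : IsUnit (ψ (DD e)) :=
      (IsLocalization.Away.algebraMap_isUnit (S := Localization.Away (DD e)) (DD e)).map φ
    rw [DD_map] at hD
    refine field_part e b _ ?_ ?_ hD
    · have := congrArg (fun t => theta K (AdjoinRoot (pol a)) n (bm _ ψ t)) (yW_root (eA e) (PP K n))
      simp only [map_zero] at this
      rw [← aeval_algHom_apply, theta_aeval] at this
      erw [PP_map] at this
      exact this
    · have := congrArg (fun t => theta K (AdjoinRoot (pol a)) n (bm _ ψ t)) (zW_inv (eA e) (PP K n))
      simp only [map_mul, map_one] at this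
      rw [← aeval_algHom_apply, theta_aeval, ← derivative_map] at this
      erw [PP_map] at this
      exact left_ne_zero_of_mul_eq_one this

end KrasnerAux
theorem stmt_14 {K : Type u} [Field K] (n : ℕ) (hn : 1 ≤ n) (a : Fin n → K)
    (pa : K[X]) (hpa : pa = X ^ n + ∑ j : Fin n, C (a j) * X ^ (j : ℕ))
    (hsep : pa.Separable) (hirr : Irreducible pa) :
    ∃ (V : Scheme.{u}) (sV : V ⟶ Spec (CommRingCat.of K))
      (f : V ⟶ Spec (CommRingCat.of (MvPolynomial (Fin n) K)))
      (_ : IsEtale f)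
      (_ : f ≫ Spec.map (CommRingCat.ofHom (algebraMap K (MvPolynomial (Fin n) K))) = sV)
      (v : Spec (CommRingCat.of K) ⟶ V),
      v ≫ sV = 𝟙 (Spec (CommRingCat.of K)) ∧
      v ≫ f = Spec.map (CommRingCat.ofHom (MvPolynomial.aeval a).toRingHom) ∧
      ∀ w : Spec (CommRingCat.of K) ⟶ V, w ≫ sV = 𝟙 (Spec (CommRingCat.of K)) →
        ∀ b : Fin n → K,
          w ≫ f = Spec.map (CommRingCat.ofHom (MvPolynomial.aeval b).toRingHom) →
          (X ^ n + ∑ j : Fin n, C (b j) * X ^ (j : ℕ) : K[X]).Separable ∧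
          Irreducible (X ^ n + ∑ j : Fin n, C (b j) * X ^ (j : ℕ) : K[X]) ∧
          Nonempty
            (AdjoinRoot (X ^ n + ∑ j : Fin n, C (b j) * X ^ (j : ℕ) : K[X]) ≃ₐ[K]
              AdjoinRoot pa) := by
  subst hpa
  obtain ⟨B, _, _, hE, ⟨φ, hφ⟩, hB⟩ := KrasnerAux.core n a hsep hirr
  have hca : ∀ b : Fin n → K, (MvPolynomial.aeval b).toRingHom.comp
      (algebraMap K (MvPolynomial (Fin n) K)) = RingHom.id K := by
    intro b; ext x; simp
  have hvf : Spec.map (CommRingCat.ofHom φ) ≫ Spec.map (CommRingCat.ofHom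
      (algebraMap (MvPolynomial (Fin n) K) B)) =
      Spec.map (CommRingCat.ofHom (MvPolynomial.aeval a).toRingHom) := by
    rw [← Spec.map_comp, ← CommRingCat.ofHom_comp, hφ]
  refine ⟨Spec (CommRingCat.of B), _, Spec.map (CommRingCat.ofHom
    (algebraMap (MvPolynomial (Fin n) K) B)), ?_, rfl, Spec.map (CommRingCat.ofHom φ), ?_, hvf, ?_⟩
  · refine (HasRingHomProperty.Spec_iff (P := @AlgebraicGeometry.Etale)).mpr ?_
    exact RingHom.etale_algebraMap.mpr hE
  · rw [← Category.assoc, hvf, ← Spec.map_comp, ← CommRingCat.ofHom_comp, hca]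
    exact Spec.map_id _
  · intro w _ b hwb
    refine hB (Spec.preimage w).hom b ?_
    rw [← Spec.map_preimage w, ← Spec.map_comp] at hwb
    exact congrArg CommRingCat.Hom.hom (Spec.map_injective hwb)
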